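/- Let L and L′ be coframes equipped with convergence structures, and let φ : L → L′ be a continuous coframe morphism. If c ∈ L is closed (i.e., complemented with adh_L(c) ≤ c), then φ(c) is closed in L′ (complemented with adh_{L′}(φ(c)) ≤ φ(c)). -/

import Mathlib

/-!
Complements are preserved by `φ` because it preserves `⊤`, `⊥`, `⊔` and `⊓`. For the adherence,
if `φ c` lies in the grill of a filter `F` on `L'`, then `c` lies in the grill of the filter
`φ ⁻¹' F`, since `a ⊓ c = ⊥` forces `φ a ⊓ φ c = ⊥`. Continuity thus bounds `limL' F` by
`φ (adh0 limL c)`. Since `adh0` is monotone, `adh` and `adh0` agree on complemented elements,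
so `adh limL' (φ c) ≤ φ (adh limL c) ≤ φ c`.
-/

/-- The grill of a subset `A` of a lattice with bottom:
`A^# = {ℓ | ∀ a ∈ A, a ⊓ ℓ ≠ ⊥}`. -/
def grill {L : Type*} [Lattice L] [OrderBot L] (A : Set L) : Set L :=
  {l | ∀ a ∈ A, a ⊓ l ≠ ⊥}

/-- A filter on a lattice: a nonempty, upward-closed subset closed under binary meets. -/
def IsLatFilter {L : Type*} [Lattice L] (F : Set L) : Prop :=
  F.Nonempty ∧ (∀ x ∈ F, ∀ y : L, x ≤ y → y ∈ F) ∧ ∀ x ∈ F, ∀ y ∈ F, x ⊓ y ∈ F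

/-- A convergence structure on a lattice: a map on subsets, monotone on filters. -/
def ConvMono {L : Type*} [Lattice L] (lim : Set L → L) : Prop :=
  ∀ F G : Set L, IsLatFilter F → IsLatFilter G → F ⊆ G → lim F ≤ lim G

/-- An element `a` of a bounded lattice is complemented if it has a complement. -/
def Cmpl {L : Type*} [Lattice L] [BoundedOrder L] (a : L) : Prop :=
  ∃ b : L, a ⊔ b = ⊤ ∧ a ⊓ b = ⊥

/-- A coframe morphism: preserves arbitrary infima and finite suprema. -/
def IsCoframeHom {L L' : Type*} [Order.Coframe L] [Order.Coframe L'] (φ : L → L') : Prop :=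
  (∀ S : Set L, φ (sInf S) = sInf (φ '' S)) ∧ (φ ⊥ = ⊥) ∧
    ∀ x y : L, φ (x ⊔ y) = φ x ⊔ φ y

/-- Continuity of `φ : L → L′`: for every filter `F` on `L′`,
`limL' F ≤ φ (limL (φ⁻¹ F))`. -/
def Contin {L L' : Type*} [Lattice L] [Lattice L']
    (limL : Set L → L) (limL' : Set L' → L') (φ : L → L') : Prop :=
  ∀ F : Set L', IsLatFilter F → limL' F ≤ φ (limL (φ ⁻¹' F))

/-- The raw adherence of a convergence structure:
`adh⁰ ℓ = ⋁ {lim F | F a filter with ℓ ∈ F^#}`. -/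
def adh0 {L : Type*} [Order.Coframe L] (lim : Set L → L) (l : L) : L :=
  sSup {x | ∃ F : Set L, IsLatFilter F ∧ l ∈ grill F ∧ x = lim F}

/-- The adherence of a convergence structure:
`adh ℓ = ⋀ {adh⁰ a | a complemented, a ≥ ℓ}`. -/
def adh {L : Type*} [Order.Coframe L] (lim : Set L → L) (l : L) : L :=
  sInf {x | ∃ a : L, Cmpl a ∧ l ≤ a ∧ x = adh0 lim a}

theorem adh0_mono {L : Type*} [Order.Coframe L] (lim : Set L → L) : Monotone (adh0 lim) := by
  intro a b hab
  apply sSup_le_sSup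
  rintro x ⟨F, hF, ha, rfl⟩
  exact ⟨F, hF, fun f hf h => ha f hf (le_bot_iff.1 (h ▸ inf_le_inf_left f hab)), rfl⟩

theorem adh_eq_adh0 {L : Type*} [Order.Coframe L] (lim : Set L → L) {c : L} (hc : Cmpl c) :
    adh lim c = adh0 lim c := by
  apply le_antisymm
  · exact sInf_le ⟨c, hc, le_rfl, rfl⟩
  · apply le_sInf
    rintro x ⟨a, -, hca, rfl⟩
    exact adh0_mono lim hca

section CoframeHom

variable {L L' : Type*} [Order.Coframe L] [Order.Coframe L'] {φ : L → L'}

theorem IsCoframeHom.map_top (hφ : IsCoframeHom φ) : φ ⊤ = ⊤ := by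
  simpa using hφ.1 ∅

theorem IsCoframeHom.map_inf (hφ : IsCoframeHom φ) (x y : L) : φ (x ⊓ y) = φ x ⊓ φ y := by
  simpa [Set.image_pair, sInf_pair] using hφ.1 {x, y}

theorem IsCoframeHom.mono (hφ : IsCoframeHom φ) : Monotone φ := by
  intro x y hxy
  rw [← sup_eq_right.2 hxy, hφ.2.2]
  exact le_sup_left

theorem IsCoframeHom.cmpl (hφ : IsCoframeHom φ) {c : L} (hc : Cmpl c) : Cmpl (φ c) := by
  obtain ⟨d, h1, h2⟩ := hc
  exact ⟨φ d, by rw [← hφ.2.2, h1, hφ.map_top], by rw [← hφ.map_inf, h2, hφ.2.1]⟩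

theorem IsCoframeHom.isLatFilter_preimage (hφ : IsCoframeHom φ) {F : Set L'}
    (hF : IsLatFilter F) : IsLatFilter (φ ⁻¹' F) := by
  obtain ⟨⟨f, hf⟩, hup, hinf⟩ := hF
  refine ⟨⟨⊤, ?_⟩, fun x hx y hxy => hup _ hx _ (hφ.mono hxy), fun x hx y hy => ?_⟩
  · exact hup f hf _ (hφ.map_top ▸ le_top)
  · rw [Set.mem_preimage, hφ.map_inf]
    exact hinf _ hx _ hy

theorem IsCoframeHom.adh0_le (hφ : IsCoframeHom φ) {limL : Set L → L} {limL' : Set L' → L'}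
    (hcont : Contin limL limL' φ) (c : L) : adh0 limL' (φ c) ≤ φ (adh0 limL c) := by
  apply sSup_le
  rintro x ⟨F, hF, hcF, rfl⟩
  refine (hcont F hF).trans (hφ.mono (le_sSup ⟨_, hφ.isLatFilter_preimage hF, ?_, rfl⟩))
  intro a ha h
  exact hcF (φ a) ha (by rw [← hφ.map_inf, h, hφ.2.1])

end CoframeHom

/-- A continuous coframe morphism maps closed elements to closed elements. -/
theorem stmt13 {L L' : Type*} [Order.Coframe L] [Order.Coframe L']
    (limL : Set L → L) (limL' : Set L' → L')
    (hL : ConvMono limL) (hL' : ConvMono limL')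
    (φ : L → L') (hφ : IsCoframeHom φ)
    (hcont : Contin limL limL' φ)
    (c : L) (hc : Cmpl c) (hcl : adh limL c ≤ c) :
    Cmpl (φ c) ∧ adh limL' (φ c) ≤ φ c := by
  refine ⟨hφ.cmpl hc, ?_⟩
  rw [adh_eq_adh0 _ (hφ.cmpl hc)]
  rw [adh_eq_adh0 _ hc] at hcl
  exact (hφ.adh0_le hcont c).trans (hφ.mono hcl)
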